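/- Fix p ∈ [1,∞] and let q be its Hölder conjugate (1/p + 1/q = 1). Let B_q(1) ⊂ ℝ² be the closed unit ball of the ℓ^q norm and Q := B_q(1) + (1,1) ⊂ ℝ²_{≥0} its translate. Then every normalized symplectic capacity c on subsets of ℝ⁴ satisfies c(X_{int(Q)}) = 2. (X_{int(Q)} is symplectomorphic to 𝕋² × int(B_q(1)), the open unit codisc bundle of the flat Finsler metric on 𝕋² induced by the ℓ^p norm.) -/

import Mathlib

open Set
open scoped Pointwise ENNReal

noncomputable section

/-- The standard symplectic form `ω₀` on `ℝ⁴ ≅ ℂ²`: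
`ω₀(u,v) = Σⱼ (u_{xⱼ} v_{yⱼ} - u_{yⱼ} v_{xⱼ}) = Σⱼ Im(conj(uⱼ) · vⱼ)`. -/
def stdSymp4 (u v : ℂ × ℂ) : ℝ :=
  ((starRingEnd ℂ) u.1 * v.1).im + ((starRingEnd ℂ) u.2 * v.2).im

/-- `U` symplectically embeds into `V` inside `ℝ⁴ ≅ ℂ²`: there is a smooth injective
map on `U` with image in `V` whose derivative preserves `ω₀`. -/
def SymplecticEmbeds4 (U V : Set (ℂ × ℂ)) : Prop :=
  ∃ f : ℂ × ℂ → ℂ × ℂ,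
    ContDiffOn ℝ (⊤ : ℕ∞) f U ∧ Set.InjOn f U ∧ Set.MapsTo f U V ∧
    ∀ x ∈ U, ∀ u v : ℂ × ℂ,
      stdSymp4 (fderivWithin ℝ f U x u) (fderivWithin ℝ f U x v) = stdSymp4 u v

/-- The moment map `μ : ℂ² → ℝ²`, `μ(z) = π(|z₁|², |z₂|²)`. -/
def mu4 (z : ℂ × ℂ) : ℝ × ℝ :=
  (Real.pi * Complex.normSq z.1, Real.pi * Complex.normSq z.2)

/-- The open Euclidean ball `B⁴(r) ⊆ ℂ²`. -/
def ball4 (r : ℝ) : Set (ℂ × ℂ) :=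
  {z | Complex.normSq z.1 + Complex.normSq z.2 < r ^ 2}

/-- The open symplectic cylinder `Z⁴(r) = {z ∈ ℂ² : |z₁| < r}`. -/
def cyl4 (r : ℝ) : Set (ℂ × ℂ) :=
  {z | Complex.normSq z.1 < r ^ 2}

/-- A normalized symplectic capacity on subsets of `ℝ⁴ ≅ ℂ²`: monotone under
symplectic embeddings, conformal, and normalized on balls and cylinders. -/
def IsNormalizedCapacity4 (c : Set (ℂ × ℂ) → ℝ≥0∞) : Prop :=
  (∀ U V : Set (ℂ × ℂ), SymplecticEmbeds4 U V → c U ≤ c V) ∧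
  (∀ lam : ℝ, 0 < lam → ∀ U : Set (ℂ × ℂ),
    c (lam • U) = ENNReal.ofReal (lam ^ 2) * c U) ∧
  (∀ r : ℝ, 0 < r →
    c (ball4 r) = ENNReal.ofReal (Real.pi * r ^ 2) ∧
    c (cyl4 r) = ENNReal.ofReal (Real.pi * r ^ 2))

/-- The closed unit ball of the `ℓ^q` norm on `ℝ²`, for `q ∈ [1,∞]` (an extended real). -/
def lqUnitBall (q : ℝ≥0∞) : Set (ℝ × ℝ) :=
  if q = ⊤ then {v | max |v.1| |v.2| ≤ 1}
  else {v | (|v.1| ^ q.toReal + |v.2| ^ q.toReal) ^ (1 / q.toReal) ≤ 1}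

/-!
The upper bound holds because `X_{int(Q)}` lies in the cylinder `π |z₁|² < 2`.

For the lower bound we embed balls of capacity arbitrarily close to `2` into the part of
`X_{int(Q)}` over the open diamond `|x₁ - 1| + |x₂ - 1| < 1`, which is contained in every `Q`. The
linear change of action-angle coordinates with actions `1 + (q₁ ± q₂) / 2` and angles `p₁ ± p₂`
shows that the domain over the diamond contains the Lagrangian product
`{|qⱼ| < 1} × {|p₁| + |p₂| < 1 / 2}`. It therefore suffices to find, for each `d > 0`, an
area-preserving embedding `z ↦ (q, p)` of the plane into `(-1, 1) × ℝ` with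
`|p| < d + π |z|² / 4`: applied to both factors of `ℂ²` it sends the ball with
`2 d + π r² / 4 = 1 / 2` into the product.

To construct it, map the plane onto the upper sheet of `S² = d² + X² + Y²` by the rotationally
symmetric map for which `S = d + π |z|² / 4`; up to a constant it preserves area, by Archimedes'
argument. In the equidistant coordinates `X = √(d² + Y²) sinh u` the area form `dX ∧ dY / S` becomes
`du ∧ dY / cosh u`, hence `q = (2 / π) arctan (sinh u)` and `p = Y cosh u` are conjugate, and
`|p| < √(d² + Y²) cosh u = S`.
-/

section Wedge

variable {E : Type*} [NormedAddCommGroup E] [NormedSpace ℝ E]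

/-- The `2`-form `df ∧ dg` of two real functions, at the point `x` and evaluated on `(u, v)`. A map
with components `(f₁, g₁, f₂, g₂)` pulls `ω₀` back to `df₁ ∧ dg₁ + df₂ ∧ dg₂`. -/
def wedge (f g : E → ℝ) (x u v : E) : ℝ :=
  fderiv ℝ f x u * fderiv ℝ g x v - fderiv ℝ f x v * fderiv ℝ g x u

variable {f g : E → ℝ} {x : E}

lemma wedge_swap (f g : E → ℝ) (x u v : E) : wedge f g x u v = -wedge g f x u v := by
  simp only [wedge]
  ring

lemma wedge_of_hasFDerivAt {f' g' : E →L[ℝ] ℝ} (hf : HasFDerivAt f f' x) (hg : HasFDerivAt g g' x)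
    (u v : E) : wedge f g x u v = f' u * g' v - f' v * g' u := by
  rw [wedge, hf.fderiv, hg.fderiv]

lemma wedge_comp {F : Type*} [NormedAddCommGroup F] [NormedSpace ℝ F] {f g : F → ℝ} {φ : E → F}
    {φ' : E →L[ℝ] F} (hf : DifferentiableAt ℝ f (φ x)) (hg : DifferentiableAt ℝ g (φ x))
    (hφ : HasFDerivAt φ φ' x) (u v : E) :
    wedge (fun y ↦ f (φ y)) (fun y ↦ g (φ y)) x u v = wedge f g (φ x) (φ' u) (φ' v) :=
  wedge_of_hasFDerivAt (hf.hasFDerivAt.comp x hφ) (hg.hasFDerivAt.comp x hφ) u v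

lemma wedge_comp_left {φ : ℝ → ℝ} {φ' : ℝ} (hφ : HasDerivAt φ φ' (f x))
    (hf : DifferentiableAt ℝ f x) (hg : DifferentiableAt ℝ g x) (u v : E) :
    wedge (fun y ↦ φ (f y)) g x u v = φ' * wedge f g x u v := by
  have hφf : HasFDerivAt (fun y ↦ φ (f y)) _ x := hφ.comp_hasFDerivAt x hf.hasFDerivAt
  rw [wedge_of_hasFDerivAt hφf hg.hasFDerivAt, wedge]
  simp only [smul_apply, smul_eq_mul]
  ring

lemma wedge_mul_comp_self {φ : ℝ → ℝ} (hφ : DifferentiableAt ℝ φ (g x))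
    (hf : DifferentiableAt ℝ f x) (hg : DifferentiableAt ℝ g x) (u v : E) :
    wedge (fun y ↦ f y * φ (g y)) g x u v = φ (g x) * wedge f g x u v := by
  have hφg : HasFDerivAt (fun y ↦ φ (g y)) _ x :=
    hφ.hasDerivAt.comp_hasFDerivAt x hg.hasFDerivAt
  rw [wedge_of_hasFDerivAt (hf.hasFDerivAt.fun_mul hφg) hg.hasFDerivAt, wedge]
  simp only [add_apply, smul_apply, smul_eq_mul]
  ring

lemma wedge_mul_cos_mul_sin {r θ : E → ℝ} (hr : DifferentiableAt ℝ r x)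
    (hθ : DifferentiableAt ℝ θ x) (u v : E) :
    wedge (fun y ↦ r y * Real.cos (θ y)) (fun y ↦ r y * Real.sin (θ y)) x u v =
      r x * wedge r θ x u v := by
  simp only [wedge, fderiv_fun_mul hr hθ.cos, fderiv_fun_mul hr hθ.sin, fderiv_cos hθ,
    fderiv_sin hθ, add_apply, smul_apply, smul_eq_mul]
  linear_combination (fderiv ℝ r x u * fderiv ℝ θ x v - fderiv ℝ r x v * fderiv ℝ θ x u) * r x *
    Real.sin_sq_add_cos_sq (θ x)

lemma wedge_half_add_add_wedge_half_sub {f₁ g₁ f₂ g₂ : E → ℝ} (hf₁ : DifferentiableAt ℝ f₁ x)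
    (hg₁ : DifferentiableAt ℝ g₁ x) (hf₂ : DifferentiableAt ℝ f₂ x)
    (hg₂ : DifferentiableAt ℝ g₂ x) (a : ℝ) (u v : E) :
    wedge (fun y ↦ a + (f₁ y + f₂ y) / 2) (fun y ↦ g₁ y + g₂ y) x u v +
        wedge (fun y ↦ a + (f₁ y - f₂ y) / 2) (fun y ↦ g₁ y - g₂ y) x u v =
      wedge f₁ g₁ x u v + wedge f₂ g₂ x u v := by
  simp only [wedge, div_eq_mul_inv, fderiv_const_add, fderiv_mul_const (hf₁.fun_add hf₂),
    fderiv_mul_const (hf₁.fun_sub hf₂), fderiv_fun_add hf₁ hf₂, fderiv_fun_sub hf₁ hf₂,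
    fderiv_fun_add hg₁ hg₂, fderiv_fun_sub hg₁ hg₂, add_apply, sub_apply, smul_apply, smul_eq_mul]
  ring

lemma wedge_re_im (z u v : ℂ) : wedge Complex.re Complex.im z u v = u.re * v.im - v.re * u.im :=
  wedge_of_hasFDerivAt Complex.reCLM.hasFDerivAt Complex.imCLM.hasFDerivAt u v

lemma stdSymp4_eq_wedge (z u v : ℂ × ℂ) :
    stdSymp4 u v = wedge Complex.re Complex.im z.1 u.1 v.1 +
      wedge Complex.re Complex.im z.2 u.2 v.2 := by
  simp only [stdSymp4, wedge_re_im, Complex.mul_im, Complex.conj_re, Complex.conj_im]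
  ring

lemma stdSymp4_fderiv {F : E → ℂ × ℂ} (hF : DifferentiableAt ℝ F x) (u v : E) :
    stdSymp4 (fderiv ℝ F x u) (fderiv ℝ F x v) =
      wedge (fun y ↦ (F y).1.re) (fun y ↦ (F y).1.im) x u v +
        wedge (fun y ↦ (F y).2.re) (fun y ↦ (F y).2.im) x u v := by
  rw [stdSymp4_eq_wedge (F x)]
  congr 1
  · exact (wedge_comp Complex.reCLM.differentiableAt Complex.imCLM.differentiableAt
      hF.hasFDerivAt.fst u v).symm
  · exact (wedge_comp Complex.reCLM.differentiableAt Complex.imCLM.differentiableAt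
      hF.hasFDerivAt.snd u v).symm

lemma wedge_re_mul_im_mul {w : ℝ → ℝ} {w' : ℝ} {z : ℂ}
    (hw : HasDerivAt w w' (Complex.normSq z)) (u v : ℂ) :
    wedge (fun z ↦ z.re * w (Complex.normSq z)) (fun z ↦ z.im * w (Complex.normSq z)) z u v =
      (w (Complex.normSq z) ^ 2 + 2 * Complex.normSq z * w (Complex.normSq z) * w') *
        wedge Complex.re Complex.im z u v := by
  have hre : HasFDerivAt Complex.re Complex.reCLM z := Complex.reCLM.hasFDerivAt
  have him : HasFDerivAt Complex.im Complex.imCLM z := Complex.imCLM.hasFDerivAt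
  have hnormSq : HasFDerivAt (fun z ↦ Complex.normSq z) _ z := (hre.mul hre).add (him.mul him)
  have hscale : HasFDerivAt (fun z ↦ w (Complex.normSq z)) _ z := hw.comp_hasFDerivAt z hnormSq
  rw [wedge_of_hasFDerivAt (hre.fun_mul hscale) (him.fun_mul hscale), wedge_re_im]
  simp only [add_apply, smul_apply, smul_eq_mul, Complex.reCLM_apply, Complex.imCLM_apply,
    Complex.normSq_apply]
  ring

end Wedge

section Strip

open scoped Real

variable {d : ℝ}

/-- The radial factor of the equal-area map from the plane to the hyperboloid
`S² = d² + X² + Y²`, as a function of `s = |z|²`. It is chosen so that the image of `z` has height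
`S = d + π |z|² / 4`. -/
def hyperboloidScale (d s : ℝ) : ℝ := √(π / 4 * (π / 4 * s + 2 * d))

/-- The `X`-coordinate of the equal-area map from the plane to the hyperboloid. -/
def hyperboloidX (d : ℝ) (z : ℂ) : ℝ := z.re * hyperboloidScale d (Complex.normSq z)

/-- The `Y`-coordinate of the equal-area map from the plane to the hyperboloid. -/
def hyperboloidY (d : ℝ) (z : ℂ) : ℝ := z.im * hyperboloidScale d (Complex.normSq z)

/-- The number `sinh u`, where `u` is the first equidistant coordinate of the hyperboloid:
`X = √(d² + Y²) sinh u` and `S = √(d² + Y²) cosh u`. -/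
def sinhEquidistant (d : ℝ) (z : ℂ) : ℝ := hyperboloidX d z * (√(d ^ 2 + hyperboloidY d z ^ 2))⁻¹

/-- The position coordinate `(2 / π) arctan (sinh u)` of the area-preserving embedding of the plane
into the strip `(-1, 1) × ℝ`; `arctan ∘ sinh` is the Gudermannian function. -/
def stripPos (d : ℝ) (z : ℂ) : ℝ := 2 / π * Real.arctan (sinhEquidistant d z)

/-- The momentum coordinate `Y cosh u` of the area-preserving embedding of the plane into the strip
`(-1, 1) × ℝ`, conjugate to `stripPos`. -/
def stripMom (d : ℝ) (z : ℂ) : ℝ := hyperboloidY d z * √(1 + sinhEquidistant d z ^ 2)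

lemma hyperboloidScale_pos (hd : 0 < d) {s : ℝ} (hs : 0 ≤ s) : 0 < hyperboloidScale d s :=
  Real.sqrt_pos.2 (by positivity)

lemma sq_hyperboloidScale (hd : 0 < d) {s : ℝ} (hs : 0 ≤ s) :
    hyperboloidScale d s ^ 2 = π / 4 * (π / 4 * s + 2 * d) :=
  Real.sq_sqrt (by positivity)

lemma hasDerivAt_hyperboloidScale (hd : 0 < d) {s : ℝ} (hs : 0 ≤ s) :
    HasDerivAt (hyperboloidScale d) (π / 4 * (π / 4) / (2 * hyperboloidScale d s)) s := by
  have hlin : HasDerivAt (fun s ↦ π / 4 * (π / 4 * s + 2 * d)) (π / 4 * (π / 4)) s := by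
    simpa only [mul_one] using
      (((hasDerivAt_id' s).const_mul (π / 4)).add_const (2 * d)).const_mul (π / 4)
  exact hlin.sqrt (by positivity)

lemma hyperboloid_height_sq (hd : 0 < d) (z : ℂ) :
    d ^ 2 + hyperboloidX d z ^ 2 + hyperboloidY d z ^ 2 =
      (d + π / 4 * Complex.normSq z) ^ 2 := by
  simp only [hyperboloidX, hyperboloidY, mul_pow, sq_hyperboloidScale hd (Complex.normSq_nonneg z)]
  rw [Complex.normSq_apply]
  ring

lemma contDiff_hyperboloidScale (hd : 0 < d) :
    ContDiff ℝ (⊤ : ℕ∞) fun z : ℂ ↦ hyperboloidScale d (Complex.normSq z) := by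
  have hnormSq : ContDiff ℝ (⊤ : ℕ∞) fun z : ℂ ↦ Complex.normSq z := by
    simp only [Complex.normSq_apply]
    exact (Complex.reCLM.contDiff.mul Complex.reCLM.contDiff).add
      (Complex.imCLM.contDiff.mul Complex.imCLM.contDiff)
  refine (contDiff_const.mul ((contDiff_const.mul hnormSq).add contDiff_const)).sqrt fun z ↦ ?_
  have hz := Complex.normSq_nonneg z
  positivity

lemma contDiff_hyperboloidX (hd : 0 < d) : ContDiff ℝ (⊤ : ℕ∞) (hyperboloidX d) :=
  Complex.reCLM.contDiff.mul (contDiff_hyperboloidScale hd)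

lemma contDiff_hyperboloidY (hd : 0 < d) : ContDiff ℝ (⊤ : ℕ∞) (hyperboloidY d) :=
  Complex.imCLM.contDiff.mul (contDiff_hyperboloidScale hd)

lemma contDiff_inv_sqrt_add_sq (hd : 0 < d) :
    ContDiff ℝ (⊤ : ℕ∞) fun y : ℝ ↦ (√(d ^ 2 + y ^ 2))⁻¹ :=
  ((contDiff_const.add (contDiff_id.pow 2)).sqrt fun y ↦ by positivity).inv fun y ↦ by positivity

lemma contDiff_sqrt_one_add_sq : ContDiff ℝ (⊤ : ℕ∞) fun a : ℝ ↦ √(1 + a ^ 2) :=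
  (contDiff_const.add (contDiff_id.pow 2)).sqrt fun a ↦ by positivity

lemma contDiff_sinhEquidistant (hd : 0 < d) : ContDiff ℝ (⊤ : ℕ∞) (sinhEquidistant d) :=
  (contDiff_hyperboloidX hd).mul
    ((contDiff_inv_sqrt_add_sq hd).comp (contDiff_hyperboloidY hd))

lemma contDiff_stripPos (hd : 0 < d) : ContDiff ℝ (⊤ : ℕ∞) (stripPos d) :=
  contDiff_const.mul (contDiff_sinhEquidistant hd).arctan

lemma contDiff_stripMom (hd : 0 < d) : ContDiff ℝ (⊤ : ℕ∞) (stripMom d) :=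
  (contDiff_hyperboloidY hd).mul (contDiff_sqrt_one_add_sq.comp (contDiff_sinhEquidistant hd))

/-- The equal-area property of the map to the hyperboloid, whose area form is `dX ∧ dY / S`. -/
lemma wedge_hyperboloid (hd : 0 < d) (z u v : ℂ) :
    wedge (hyperboloidX d) (hyperboloidY d) z u v =
      π / 2 * (d + π / 4 * Complex.normSq z) * wedge Complex.re Complex.im z u v := by
  have hz := Complex.normSq_nonneg z
  have hscale := (hyperboloidScale_pos hd hz).ne'
  unfold hyperboloidX hyperboloidY
  rw [wedge_re_mul_im_mul (hasDerivAt_hyperboloidScale hd hz), sq_hyperboloidScale hd hz]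
  field_simp
  ring

lemma sqrt_mul_sqrt_one_add_sinhEquidistant_sq (hd : 0 < d) (z : ℂ) :
    √(d ^ 2 + hyperboloidY d z ^ 2) * √(1 + sinhEquidistant d z ^ 2) =
      d + π / 4 * Complex.normSq z := by
  have hrad : 0 < d ^ 2 + hyperboloidY d z ^ 2 := by positivity
  have hheight : 0 ≤ d + π / 4 * Complex.normSq z :=
    add_nonneg hd.le (mul_nonneg (by positivity) (Complex.normSq_nonneg z))
  rw [← Real.sqrt_mul hrad.le, Real.sqrt_eq_iff_eq_sq (by positivity) hheight,
    ← hyperboloid_height_sq hd, sinhEquidistant, mul_pow, inv_pow, Real.sq_sqrt hrad.le]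
  field_simp
  ring

lemma wedge_stripPos_stripMom (hd : 0 < d) (z u v : ℂ) :
    wedge (stripPos d) (stripMom d) z u v = wedge Complex.re Complex.im z u v := by
  have hX := (contDiff_hyperboloidX hd).differentiable (by simp) z
  have hY := (contDiff_hyperboloidY hd).differentiable (by simp) z
  have ha := (contDiff_sinhEquidistant hd).differentiable (by simp) z
  have hP := (contDiff_stripMom hd).differentiable (by simp) z
  have hpos : wedge (stripPos d) (stripMom d) z u v =
      2 / π * (1 / √(1 + sinhEquidistant d z ^ 2) ^ 2) *
        wedge (sinhEquidistant d) (stripMom d) z u v := by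
    rw [Real.sq_sqrt (by positivity)]
    exact wedge_comp_left ((Real.hasDerivAt_arctan _).const_mul _) ha hP u v
  have hmom : wedge (sinhEquidistant d) (stripMom d) z u v =
      √(1 + sinhEquidistant d z ^ 2) * wedge (sinhEquidistant d) (hyperboloidY d) z u v := by
    rw [wedge_swap, wedge_swap (sinhEquidistant d) (hyperboloidY d), mul_neg, neg_inj]
    exact wedge_mul_comp_self (contDiff_sqrt_one_add_sq.differentiable (by simp) _) hY ha u v
  have hsinh : wedge (sinhEquidistant d) (hyperboloidY d) z u v =
      (√(d ^ 2 + hyperboloidY d z ^ 2))⁻¹ * wedge (hyperboloidX d) (hyperboloidY d) z u v :=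
    wedge_mul_comp_self ((contDiff_inv_sqrt_add_sq hd).differentiable (by simp) _) hX hY u v
  rw [hpos, hmom, hsinh, wedge_hyperboloid hd, ← sqrt_mul_sqrt_one_add_sinhEquidistant_sq hd]
  field_simp

lemma abs_stripPos_lt_one (d : ℝ) (z : ℂ) : |stripPos d z| < 1 := by
  have harctan : |Real.arctan (sinhEquidistant d z)| < π / 2 :=
    abs_lt.2 ⟨Real.neg_pi_div_two_lt_arctan _, Real.arctan_lt_pi_div_two _⟩
  calc |stripPos d z| = 2 / π * |Real.arctan (sinhEquidistant d z)| := by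
        rw [stripPos, abs_mul, abs_of_pos (by positivity)]
    _ < 2 / π * (π / 2) := by gcongr
    _ = 1 := by field_simp

lemma abs_stripMom_lt (hd : 0 < d) (z : ℂ) : |stripMom d z| < d + π / 4 * Complex.normSq z := by
  have hY : |hyperboloidY d z| < √(d ^ 2 + hyperboloidY d z ^ 2) :=
    Real.lt_sqrt_of_sq_lt (by rw [sq_abs]; linarith [pow_pos hd 2])
  rw [stripMom, abs_mul, abs_of_pos (by positivity : 0 < √(1 + sinhEquidistant d z ^ 2)),
    ← sqrt_mul_sqrt_one_add_sinhEquidistant_sq hd]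
  gcongr

lemma injective_hyperboloidX_hyperboloidY (hd : 0 < d) :
    Function.Injective fun z ↦ (hyperboloidX d z, hyperboloidY d z) := by
  intro z z' h
  obtain ⟨hX, hY⟩ := Prod.ext_iff.1 h
  dsimp only at hX hY
  have hheight : (d + π / 4 * Complex.normSq z) ^ 2 = (d + π / 4 * Complex.normSq z') ^ 2 := by
    rw [← hyperboloid_height_sq hd, ← hyperboloid_height_sq hd, hX, hY]
  have hnormSq : Complex.normSq z = Complex.normSq z' := by
    have hz := Complex.normSq_nonneg z
    have hz' := Complex.normSq_nonneg z'
    rw [sq_eq_sq₀ (by positivity) (by positivity)] at hheight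
    exact mul_left_cancel₀ (by positivity) (add_left_cancel hheight)
  have hscale := (hyperboloidScale_pos hd (Complex.normSq_nonneg z')).ne'
  rw [hyperboloidX, hyperboloidX, hnormSq] at hX
  rw [hyperboloidY, hyperboloidY, hnormSq] at hY
  exact Complex.ext (mul_right_cancel₀ hscale hX) (mul_right_cancel₀ hscale hY)

lemma injective_stripPos_stripMom (hd : 0 < d) :
    Function.Injective fun z ↦ (stripPos d z, stripMom d z) := by
  intro z z' h
  obtain ⟨hQ, hP⟩ := Prod.ext_iff.1 h
  have ha : sinhEquidistant d z = sinhEquidistant d z' :=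
    Real.arctan_injective (mul_left_cancel₀ (by positivity) hQ)
  have hY : hyperboloidY d z = hyperboloidY d z' := by
    simp only [stripMom, ha] at hP
    exact mul_right_cancel₀ (by positivity) hP
  have hX : hyperboloidX d z = hyperboloidX d z' := by
    rw [sinhEquidistant, sinhEquidistant, hY] at ha
    exact mul_right_cancel₀ (by positivity) ha
  exact injective_hyperboloidX_hyperboloidY hd (Prod.ext hX hY)

end Strip

section ActionAngle

open scoped Real

/-- The open diamond of `ℓ¹`-radius one about `(1, 1)`. -/
def openDiamond : Set (ℝ × ℝ) := {x | |x.1 - 1| + |x.2 - 1| < 1}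

lemma isOpen_openDiamond : IsOpen openDiamond :=
  isOpen_lt (by fun_prop) continuous_const

lemma pos_of_mem_openDiamond {x : ℝ × ℝ} (hx : x ∈ openDiamond) : 0 < x.1 ∧ 0 < x.2 := by
  have hx' : |x.1 - 1| + |x.2 - 1| < 1 := hx
  have h₁ := neg_abs_le (x.1 - 1)
  have h₂ := neg_abs_le (x.2 - 1)
  constructor <;> linarith [abs_nonneg (x.1 - 1), abs_nonneg (x.2 - 1)]

lemma half_add_half_sub_mem_openDiamond {a b : ℝ} (ha : |a| < 1) (hb : |b| < 1) :
    (1 + (a + b) / 2, 1 + (a - b) / 2) ∈ openDiamond := by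
  change |1 + (a + b) / 2 - 1| + |1 + (a - b) / 2 - 1| < 1
  rw [abs_lt] at ha hb
  rcases abs_cases (1 + (a + b) / 2 - 1) with h | h <;>
    rcases abs_cases (1 + (a - b) / 2 - 1) with h' | h' <;> linarith

/-- The point of the plane with action `A = π |z|²` and angle `t ∈ ℝ / ℤ`; the area form is
`dA ∧ dt`. -/
def ofActionAngle (A t : ℝ) : ℂ := Complex.polarCoord.symm (√(A / π), 2 * π * t)

lemma ofActionAngle_re (A t : ℝ) : (ofActionAngle A t).re = √(A / π) * Real.cos (2 * π * t) :=
  rfl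

lemma ofActionAngle_im (A t : ℝ) : (ofActionAngle A t).im = √(A / π) * Real.sin (2 * π * t) :=
  rfl

lemma pi_mul_normSq_ofActionAngle {A : ℝ} (hA : 0 ≤ A) (t : ℝ) :
    π * Complex.normSq (ofActionAngle A t) = A := by
  rw [Complex.normSq_eq_norm_sq, ofActionAngle, Complex.norm_polarCoord_symm, sq_abs,
    Real.sq_sqrt (by positivity)]
  field_simp

lemma mem_polarCoord_target_of_actionAngle {A t : ℝ} (hA : 0 < A) (ht : |t| < 1 / 2) :
    (√(A / π), 2 * π * t) ∈ Complex.polarCoord.target := by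
  rw [Complex.polarCoord_target]
  have hr : 0 < √(A / π) := Real.sqrt_pos.2 (div_pos hA Real.pi_pos)
  obtain ⟨hlower, hupper⟩ := abs_lt.1 ht
  exact ⟨hr, by nlinarith [Real.pi_pos], by nlinarith [Real.pi_pos]⟩

lemma ofActionAngle_inj {A t A' t' : ℝ} (hA : 0 < A) (ht : |t| < 1 / 2) (hA' : 0 < A')
    (ht' : |t'| < 1 / 2) : ofActionAngle A t = ofActionAngle A' t' ↔ A = A' ∧ t = t' := by
  refine ⟨fun h ↦ ⟨?_, ?_⟩, fun ⟨hAA', htt'⟩ ↦ by rw [hAA', htt']⟩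
  · rw [← pi_mul_normSq_ofActionAngle hA.le t, h, pi_mul_normSq_ofActionAngle hA'.le]
  · have hpolar := Complex.polarCoord.symm.injOn (mem_polarCoord_target_of_actionAngle hA ht)
      (mem_polarCoord_target_of_actionAngle hA' ht') h
    exact mul_left_cancel₀ Real.two_pi_pos.ne' (Prod.ext_iff.1 hpolar).2

variable {E : Type*} [NormedAddCommGroup E] [NormedSpace ℝ E] {A t : E → ℝ}

lemma contDiff_ofActionAngle (hA : ContDiff ℝ (⊤ : ℕ∞) A) (ht : ContDiff ℝ (⊤ : ℕ∞) t)
    (hpos : ∀ x, 0 < A x) : ContDiff ℝ (⊤ : ℕ∞) fun x ↦ ofActionAngle (A x) (t x) := by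
  have hr : ContDiff ℝ (⊤ : ℕ∞) fun x ↦ √(A x / π) :=
    (hA.div_const π).sqrt fun x ↦ (div_pos (hpos x) Real.pi_pos).ne'
  have hθ : ContDiff ℝ (⊤ : ℕ∞) fun x ↦ 2 * π * t x := contDiff_const.mul ht
  have h := Complex.equivRealProdCLM.symm.contDiff.comp ((hr.mul hθ.cos).prodMk (hr.mul hθ.sin))
  convert h using 2 with x
  exact Complex.ext (ofActionAngle_re _ _) (ofActionAngle_im _ _)

lemma wedge_ofActionAngle {x : E} (hA : DifferentiableAt ℝ A x) (ht : DifferentiableAt ℝ t x)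
    (hpos : 0 < A x) (u v : E) :
    wedge (fun y ↦ (ofActionAngle (A y) (t y)).re) (fun y ↦ (ofActionAngle (A y) (t y)).im)
      x u v = wedge A t x u v := by
  have hne : A x / π ≠ 0 := by positivity
  have hr : HasDerivAt (fun a ↦ √(a / π)) (1 / π / (2 * √(A x / π))) (A x) :=
    ((hasDerivAt_id' (A x)).div_const π).sqrt hne
  have hrA : DifferentiableAt ℝ (fun y ↦ √(A y / π)) x :=
    (hr.comp_hasFDerivAt x hA.hasFDerivAt).differentiableAt
  have hθ : HasDerivAt (fun s ↦ 2 * π * s) (2 * π) (t x) := hasDerivAt_const_mul (2 * π)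
  have hθt : DifferentiableAt ℝ (fun y ↦ 2 * π * t y) x := ht.const_mul (2 * π)
  simp only [ofActionAngle_re, ofActionAngle_im]
  rw [wedge_mul_cos_mul_sin hrA hθt, wedge_comp_left hr hA hθt, wedge_swap,
    wedge_comp_left hθ ht hA, wedge_swap]
  have : √(A x / π) ≠ 0 := by positivity
  field_simp

end ActionAngle

section DiamondMap

variable {Q P : ℂ → ℝ}

/-- The product of two copies of the plane mapped by `(Q, P)`, followed by the symplectic change of
coordinates with actions `1 + (q₁ ± q₂) / 2` and angles `p₁ ± p₂`. The actions fill the open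
diamond when the positions `q₁, q₂` fill `(-1, 1)`. -/
def diamondMap (Q P : ℂ → ℝ) (z : ℂ × ℂ) : ℂ × ℂ :=
  (ofActionAngle (1 + (Q z.1 + Q z.2) / 2) (P z.1 + P z.2),
    ofActionAngle (1 + (Q z.1 - Q z.2) / 2) (P z.1 - P z.2))

lemma action_pos_of_abs_lt_one (hQ : ∀ z, |Q z| < 1) (z : ℂ × ℂ) :
    0 < 1 + (Q z.1 + Q z.2) / 2 ∧ 0 < 1 + (Q z.1 - Q z.2) / 2 :=
  pos_of_mem_openDiamond (half_add_half_sub_mem_openDiamond (hQ z.1) (hQ z.2))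

lemma mu4_diamondMap_mem_openDiamond (hQ : ∀ z, |Q z| < 1) (z : ℂ × ℂ) :
    mu4 (diamondMap Q P z) ∈ openDiamond := by
  obtain ⟨h₁, h₂⟩ := action_pos_of_abs_lt_one hQ z
  rw [mu4, diamondMap, pi_mul_normSq_ofActionAngle h₁.le, pi_mul_normSq_ofActionAngle h₂.le]
  exact half_add_half_sub_mem_openDiamond (hQ z.1) (hQ z.2)

lemma contDiff_diamondMap (hQ : ∀ z, |Q z| < 1) (hQs : ContDiff ℝ (⊤ : ℕ∞) Q)
    (hPs : ContDiff ℝ (⊤ : ℕ∞) P) : ContDiff ℝ (⊤ : ℕ∞) (diamondMap Q P) := by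
  have hQ₁ : ContDiff ℝ (⊤ : ℕ∞) fun z : ℂ × ℂ ↦ Q z.1 := hQs.comp contDiff_fst
  have hQ₂ : ContDiff ℝ (⊤ : ℕ∞) fun z : ℂ × ℂ ↦ Q z.2 := hQs.comp contDiff_snd
  have hP₁ : ContDiff ℝ (⊤ : ℕ∞) fun z : ℂ × ℂ ↦ P z.1 := hPs.comp contDiff_fst
  have hP₂ : ContDiff ℝ (⊤ : ℕ∞) fun z : ℂ × ℂ ↦ P z.2 := hPs.comp contDiff_snd
  exact (contDiff_ofActionAngle (contDiff_const.add ((hQ₁.add hQ₂).div_const 2)) (hP₁.add hP₂)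
      fun z ↦ (action_pos_of_abs_lt_one hQ z).1).prodMk
    (contDiff_ofActionAngle (contDiff_const.add ((hQ₁.sub hQ₂).div_const 2)) (hP₁.sub hP₂)
      fun z ↦ (action_pos_of_abs_lt_one hQ z).2)

lemma injOn_diamondMap (hQ : ∀ z, |Q z| < 1) (hinj : Function.Injective fun z ↦ (Q z, P z)) :
    InjOn (diamondMap Q P) {z | |P z.1| + |P z.2| < 1 / 2} := by
  intro z hz z' hz' h
  obtain ⟨h₁, h₂⟩ := Prod.ext_iff.1 h
  have hpos := action_pos_of_abs_lt_one hQ z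
  have hpos' := action_pos_of_abs_lt_one hQ z'
  obtain ⟨hadd, hadd'⟩ := (ofActionAngle_inj hpos.1 ((abs_add_le _ _).trans_lt hz)
    hpos'.1 ((abs_add_le _ _).trans_lt hz')).1 h₁
  obtain ⟨hsub, hsub'⟩ := (ofActionAngle_inj hpos.2 ((abs_sub _ _).trans_lt hz)
    hpos'.2 ((abs_sub _ _).trans_lt hz')).1 h₂
  exact Prod.ext (hinj (Prod.ext (by linarith) (by linarith)))
    (hinj (Prod.ext (by linarith) (by linarith)))

lemma stdSymp4_fderiv_diamondMap (hQ : ∀ z, |Q z| < 1) (hQs : ContDiff ℝ (⊤ : ℕ∞) Q)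
    (hPs : ContDiff ℝ (⊤ : ℕ∞) P) (z u v : ℂ × ℂ) :
    stdSymp4 (fderiv ℝ (diamondMap Q P) z u) (fderiv ℝ (diamondMap Q P) z v) =
      wedge Q P z.1 u.1 v.1 + wedge Q P z.2 u.2 v.2 := by
  have hQd : Differentiable ℝ Q := hQs.differentiable (by simp)
  have hPd : Differentiable ℝ P := hPs.differentiable (by simp)
  have hQ₁ : DifferentiableAt ℝ (fun z : ℂ × ℂ ↦ Q z.1) z := (hQd z.1).comp z differentiableAt_fst
  have hQ₂ : DifferentiableAt ℝ (fun z : ℂ × ℂ ↦ Q z.2) z := (hQd z.2).comp z differentiableAt_snd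
  have hP₁ : DifferentiableAt ℝ (fun z : ℂ × ℂ ↦ P z.1) z := (hPd z.1).comp z differentiableAt_fst
  have hP₂ : DifferentiableAt ℝ (fun z : ℂ × ℂ ↦ P z.2) z := (hPd z.2).comp z differentiableAt_snd
  have hA₁ : DifferentiableAt ℝ (fun z : ℂ × ℂ ↦ 1 + (Q z.1 + Q z.2) / 2) z := by fun_prop
  have hA₂ : DifferentiableAt ℝ (fun z : ℂ × ℂ ↦ 1 + (Q z.1 - Q z.2) / 2) z := by fun_prop
  obtain ⟨h₁, h₂⟩ := action_pos_of_abs_lt_one hQ z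
  rw [stdSymp4_fderiv ((contDiff_diamondMap hQ hQs hPs).differentiable (by simp) z)]
  simp only [diamondMap]
  rw [wedge_ofActionAngle hA₁ (hP₁.fun_add hP₂) h₁, wedge_ofActionAngle hA₂ (hP₁.fun_sub hP₂) h₂,
    wedge_half_add_add_wedge_half_sub hQ₁ hP₁ hQ₂ hP₂,
    wedge_comp (hQd z.1) (hPd z.1) hasFDerivAt_fst, wedge_comp (hQd z.2) (hPd z.2) hasFDerivAt_snd]
  rfl

end DiamondMap

lemma isOpen_ball4 (r : ℝ) : IsOpen (ball4 r) :=
  isOpen_lt ((Complex.continuous_normSq.comp continuous_fst).add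
    (Complex.continuous_normSq.comp continuous_snd)) continuous_const

lemma continuous_mu4 : Continuous mu4 :=
  (continuous_const.mul (Complex.continuous_normSq.comp continuous_fst)).prodMk
    (continuous_const.mul (Complex.continuous_normSq.comp continuous_snd))

lemma SymplecticEmbeds4.of_subset {U V : Set (ℂ × ℂ)} (hU : IsOpen U) (hUV : U ⊆ V) :
    SymplecticEmbeds4 U V := by
  refine ⟨id, contDiff_id.contDiffOn, injOn_id _, hUV, fun x hx u v ↦ ?_⟩
  rw [fderivWithin_of_isOpen hU hx, fderiv_id]
  rfl

lemma SymplecticEmbeds4.mono_right {U V W : Set (ℂ × ℂ)} (h : SymplecticEmbeds4 U V)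
    (hVW : V ⊆ W) : SymplecticEmbeds4 U W := by
  obtain ⟨f, hf, hinj, hmaps, hω⟩ := h
  exact ⟨f, hf, hinj, hmaps.mono_right hVW, hω⟩

lemma symplecticEmbeds4_ball4_openDiamond {r : ℝ} (hr : Real.pi * r ^ 2 < 2) :
    SymplecticEmbeds4 (ball4 r) (mu4 ⁻¹' openDiamond) := by
  obtain ⟨d, hd⟩ : ∃ d, 2 * d + Real.pi / 4 * r ^ 2 = 1 / 2 :=
    ⟨(1 / 2 - Real.pi / 4 * r ^ 2) / 2, by ring⟩
  have hd₀ : 0 < d := by linarith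
  have hQ := abs_stripPos_lt_one d
  have hQs := contDiff_stripPos hd₀
  have hPs := contDiff_stripMom hd₀
  have hP : ∀ z ∈ ball4 r, |stripMom d z.1| + |stripMom d z.2| < 1 / 2 := by
    intro z hz
    have hz' : Complex.normSq z.1 + Complex.normSq z.2 < r ^ 2 := hz
    linarith [mul_lt_mul_of_pos_left hz' Real.pi_pos, abs_stripMom_lt hd₀ z.1,
      abs_stripMom_lt hd₀ z.2]
  refine ⟨diamondMap (stripPos d) (stripMom d), (contDiff_diamondMap hQ hQs hPs).contDiffOn,
    (injOn_diamondMap hQ (injective_stripPos_stripMom hd₀)).mono hP,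
    fun z _ ↦ mu4_diamondMap_mem_openDiamond hQ z, fun z hz u v ↦ ?_⟩
  rw [fderivWithin_of_isOpen (isOpen_ball4 r) hz, stdSymp4_fderiv_diamondMap hQ hQs hPs,
    wedge_stripPos_stripMom hd₀, wedge_stripPos_stripMom hd₀, ← stdSymp4_eq_wedge]

section Capacity

open scoped Real

variable {c : Set (ℂ × ℂ) → ℝ≥0∞} {a : ℝ}

lemma IsNormalizedCapacity4.ofReal_le (hc : IsNormalizedCapacity4 c) {V : Set (ℂ × ℂ)}
    (hV : ∀ r, 0 < r → π * r ^ 2 < a → SymplecticEmbeds4 (ball4 r) V) :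
    ENNReal.ofReal a ≤ c V := by
  refine ENNReal.le_of_forall_pos_nnreal_lt fun s hs hsa ↦ ?_
  have hr : π * √(s / π) ^ 2 = s := by
    rw [Real.sq_sqrt (by positivity)]
    field_simp
  have hr₀ : 0 < √(s / π) := Real.sqrt_pos.2 (div_pos hs Real.pi_pos)
  calc (s : ℝ≥0∞) = c (ball4 √(s / π)) := by
        rw [(hc.2.2 _ hr₀).1, hr, ENNReal.ofReal_coe_nnreal]
    _ ≤ c V := hc.1 _ _ (hV _ hr₀ (hr.trans_lt (ENNReal.coe_lt_ofReal.1 hsa)))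

lemma IsNormalizedCapacity4.le_ofReal (hc : IsNormalizedCapacity4 c) (ha : 0 < a)
    {U : Set (ℂ × ℂ)} (hU : IsOpen U) (hUa : ∀ z ∈ U, π * Complex.normSq z.1 < a) :
    c U ≤ ENNReal.ofReal a := by
  have hr : √(a / π) ^ 2 = a / π := Real.sq_sqrt (by positivity)
  have hsub : U ⊆ cyl4 √(a / π) := fun z hz ↦ by
    change Complex.normSq z.1 < √(a / π) ^ 2
    rw [hr, lt_div_iff₀' Real.pi_pos]
    exact hUa z hz
  calc c U ≤ c (cyl4 √(a / π)) := hc.1 _ _ (.of_subset hU hsub)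
    _ = ENNReal.ofReal a := by
      rw [(hc.2.2 _ (by positivity)).2, hr, mul_div_cancel₀ _ Real.pi_ne_zero]

theorem capacity_of_lp_codisc_bundle_general (hc : IsNormalizedCapacity4 c) {Ω : Set (ℝ × ℝ)}
    (hdiamond : openDiamond ⊆ Ω) (hΩ : ∀ x ∈ Ω, x.1 ≤ 2) :
    c (mu4 ⁻¹' (interior Ω ∩ {x | 0 < x.1 ∧ 0 < x.2})) = 2 := by
  rw [← ENNReal.ofReal_ofNat 2]
  apply le_antisymm
  · refine hc.le_ofReal two_pos ?_ fun z hz ↦ ?_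
    · exact (isOpen_interior.inter ((isOpen_lt continuous_const continuous_fst).inter
        (isOpen_lt continuous_const continuous_snd))).preimage continuous_mu4
    · have hstrip : Ω ⊆ Iic 2 ×ˢ univ := fun x hx ↦ ⟨hΩ x hx, mem_univ _⟩
      have hz' := interior_mono hstrip hz.1
      rw [interior_prod_eq, interior_Iic] at hz'
      exact hz'.1
  · have hsub : openDiamond ⊆ interior Ω ∩ {x | 0 < x.1 ∧ 0 < x.2} :=
      subset_inter (interior_maximal hdiamond isOpen_openDiamond) fun _ ↦ pos_of_mem_openDiamond
    exact hc.ofReal_le fun r _ hr ↦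
      (symplecticEmbeds4_ball4_openDiamond hr).mono_right (preimage_mono hsub)

end Capacity

lemma mem_lqUnitBall_of_abs_add_abs_le_one {q : ℝ≥0∞} (hq : 1 ≤ q) {v : ℝ × ℝ}
    (hv : |v.1| + |v.2| ≤ 1) : v ∈ lqUnitBall q := by
  have h₁ := abs_nonneg v.1
  have h₂ := abs_nonneg v.2
  unfold lqUnitBall
  split_ifs with hq'
  · have h₁' : |v.1| ≤ 1 := by linarith
    have h₂' : |v.2| ≤ 1 := by linarith
    exact max_le h₁' h₂'
  · have hq₁ : 1 ≤ q.toReal := ENNReal.toReal_mono hq' hq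
    have hpow₁ : |v.1| ^ q.toReal ≤ |v.1| := Real.rpow_le_self_of_le_one h₁ (by linarith) hq₁
    have hpow₂ : |v.2| ^ q.toReal ≤ |v.2| := Real.rpow_le_self_of_le_one h₂ (by linarith) hq₁
    exact Real.rpow_le_one (by positivity) (by linarith) (by positivity)

lemma abs_fst_le_one_of_mem_lqUnitBall {q : ℝ≥0∞} (hq : q ≠ 0) {v : ℝ × ℝ}
    (hv : v ∈ lqUnitBall q) : |v.1| ≤ 1 := by
  unfold lqUnitBall at hv
  split_ifs at hv with hq'
  · exact (le_max_left _ _).trans hv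
  · have hq₀ : 0 < q.toReal := ENNReal.toReal_pos hq hq'
    calc |v.1| = (|v.1| ^ q.toReal) ^ (1 / q.toReal) := by
          rw [one_div, Real.rpow_rpow_inv (abs_nonneg _) hq₀.ne']
      _ ≤ (|v.1| ^ q.toReal + |v.2| ^ q.toReal) ^ (1 / q.toReal) := by
          gcongr
          exact le_add_of_nonneg_right (by positivity)
      _ ≤ 1 := hv

lemma openDiamond_subset_image_lqUnitBall {q : ℝ≥0∞} (hq : 1 ≤ q) :
    openDiamond ⊆ (fun v : ℝ × ℝ ↦ v + (1, 1)) '' lqUnitBall q := by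
  intro x hx
  have hx' : |x.1 - 1| + |x.2 - 1| ≤ 1 := le_of_lt hx
  exact ⟨x - (1, 1), mem_lqUnitBall_of_abs_add_abs_le_one hq hx', sub_add_cancel _ _⟩

lemma fst_le_two_of_mem_image_lqUnitBall {q : ℝ≥0∞} (hq : q ≠ 0) :
    ∀ x ∈ (fun v : ℝ × ℝ ↦ v + (1, 1)) '' lqUnitBall q, x.1 ≤ 2 := by
  rintro _ ⟨v, hv, rfl⟩
  have hv₁ := (abs_le.1 (abs_fst_le_one_of_mem_lqUnitBall hq hv)).2
  change v.1 + 1 ≤ 2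
  linarith

/-- For `p ∈ [1,∞]` with Hölder conjugate `q` and `Q := B_q(1) + (1,1)`, every
normalized symplectic capacity `c` on subsets of `ℝ⁴` satisfies `c(X_{int(Q)}) = 2`. -/
theorem capacity_of_lp_codisc_bundle
    (p q : ℝ≥0∞) (hp : 1 ≤ p) (hpq : 1 / p + 1 / q = 1)
    (c : Set (ℂ × ℂ) → ℝ≥0∞) (hc : IsNormalizedCapacity4 c) :
    c (mu4 ⁻¹'
        (interior ((fun v : ℝ × ℝ => v + (1, 1)) '' lqUnitBall q) ∩
          {x : ℝ × ℝ | 0 < x.1 ∧ 0 < x.2})) = 2 := by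
  have hq : 1 ≤ q := by
    rw [← ENNReal.inv_le_one]
    calc q⁻¹ = 1 / q := (one_div q).symm
      _ ≤ 1 / p + 1 / q := le_add_self
      _ = 1 := hpq
  exact capacity_of_lp_codisc_bundle_general hc (openDiamond_subset_image_lqUnitBall hq)
    (fst_le_two_of_mem_image_lqUnitBall (one_pos.trans_le hq).ne')
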